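/- arXiv:1309.7664 — 7 statements merged into one kernel-verified Lean document; each statement's English description precedes it below -/
import Mathlib

section
/- Suppose γ₀ ∈ ℂ^K has support of size M, that Mε < 1/2, and let b = Gγ₀. Then γ₀ is the unique minimizer of the ℓ1 norm subject to the data constraint: for every γ ∈ ℂ^K with Gγ = b and γ ≠ γ₀ one has ‖γ₀‖_{ℓ1} < ‖γ‖_{ℓ1}. -/
/-!
Let `h` be the difference of two coefficient vectors with the same synthesis, so that
`∑ j, h j • g j = 0`. Pairing this relation with the unit vector `g i` writes `h i` as a
combination of the other entries with coefficients of size at most `ε`, so that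
`(1 + ε) ‖h i‖ ≤ ε ‖h‖₁`. A kernel vector is thus spread out: a set of `M` indices carries at most
the fraction `M ε / (1 + ε)` of its mass. When this fraction is below one half, moving from a vector
supported on such a set along `h` gains more ℓ1 norm off the set than it can lose on it.
-/

open Finset

/-- The vector ℓ1 norm on ℂ^n. -/
noncomputable def l1norm {n : ℕ} (v : Fin n → ℂ) : ℝ := ∑ i, ‖v i‖

/-- The vector ℓ2 norm on ℂ^n. -/
noncomputable def l2norm {n : ℕ} (v : Fin n → ℂ) : ℝ := Real.sqrt (∑ i, ‖v i‖ ^ 2)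

section NullSpaceProperty

variable {ι R E F : Type*} [Fintype ι]

lemma sum_norm_add_sum_norm_sub_le [SeminormedAddCommGroup F] {S : Finset ι} {x : ι → F}
    (hx : ∀ i ∉ S, x i = 0) (y : ι → F) :
    ∑ i, ‖x i‖ + ∑ i, ‖y i - x i‖ ≤ ∑ i, ‖y i‖ + 2 * ∑ i ∈ S, ‖y i - x i‖ := by
  classical
  have pointwise (i : ι) :
      ‖x i‖ + ‖y i - x i‖ ≤ ‖y i‖ + if i ∈ S then 2 * ‖y i - x i‖ else 0 := by
    split_ifs with hi
    · linarith [norm_le_norm_add_norm_sub (y i) (x i)]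
    · simp only [hx i hi, norm_zero, sub_zero, zero_add, add_zero, le_refl]
  calc ∑ i, ‖x i‖ + ∑ i, ‖y i - x i‖
      = ∑ i, (‖x i‖ + ‖y i - x i‖) := sum_add_distrib.symm
    _ ≤ ∑ i, (‖y i‖ + if i ∈ S then 2 * ‖y i - x i‖ else 0) := sum_le_sum fun i _ => pointwise i
    _ = ∑ i, ‖y i‖ + 2 * ∑ i ∈ S, ‖y i - x i‖ := by
      rw [sum_add_distrib, sum_ite_mem, univ_inter, mul_sum]

variable [NormedRing R] [AddCommGroup E] [Module R E]

/-- The null space property of `A` relative to `S`, the condition for ℓ1 recovery of vectors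
supported on `S`: every nonzero kernel vector has less ℓ1 mass on `S` than off `S`. It is encoded as
`2 ‖h_S‖₁ < ‖h‖₁`, which does not mention the complement of `S`. -/
def HasNullSpaceProperty (A : (ι → R) →ₗ[R] E) (S : Finset ι) : Prop :=
  ∀ h : ι → R, A h = 0 → h ≠ 0 → 2 * ∑ i ∈ S, ‖h i‖ < ∑ i, ‖h i‖

theorem HasNullSpaceProperty.sum_norm_lt_sum_norm {A : (ι → R) →ₗ[R] E} {S : Finset ι}
    (hA : HasNullSpaceProperty A S) {x y : ι → R} (hx : ∀ i ∉ S, x i = 0) (hxy : A y = A x)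
    (hne : y ≠ x) : ∑ i, ‖x i‖ < ∑ i, ‖y i‖ := by
  have hmass : 2 * ∑ i ∈ S, ‖y i - x i‖ < ∑ i, ‖y i - x i‖ :=
    hA (y - x) (by rw [map_sub, hxy, sub_self]) (sub_ne_zero.mpr hne)
  linarith [sum_norm_add_sum_norm_sub_le hx y]

end NullSpaceProperty

section Coherence

variable {𝕜 ι E : Type*} [RCLike 𝕜] [Fintype ι] [SeminormedAddCommGroup E] [InnerProductSpace 𝕜 E]
  {g : ι → E} {ε : ℝ}

lemma one_add_mul_norm_le_mul_sum_norm {h : ι → 𝕜} {i : ι} (hunit : ‖g i‖ = 1)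
    (hcoh : ∀ j ≠ i, ‖inner 𝕜 (g i) (g j)‖ ≤ ε) (hker : ∑ j, h j • g j = 0) :
    (1 + ε) * ‖h i‖ ≤ ε * ∑ j, ‖h j‖ := by
  classical
  have hpair : h i + ∑ j ∈ univ.erase i, h j * inner 𝕜 (g i) (g j) = 0 := by
    calc h i + ∑ j ∈ univ.erase i, h j * inner 𝕜 (g i) (g j)
        = ∑ j, h j * inner 𝕜 (g i) (g j) := by
          rw [← add_sum_erase _ _ (mem_univ i), inner_self_eq_norm_sq_to_K, hunit,
            RCLike.ofReal_one, one_pow, mul_one]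
      _ = inner 𝕜 (g i) (∑ j, h j • g j) := by simp only [inner_sum, inner_smul_right]
      _ = 0 := by rw [hker, inner_zero_right]
  have hentry : ‖h i‖ ≤ ε * ∑ j ∈ univ.erase i, ‖h j‖ := by
    rw [eq_neg_of_add_eq_zero_left hpair, norm_neg, mul_sum]
    refine norm_sum_le_of_le _ fun j hj => ?_
    rw [norm_mul, mul_comm]
    exact mul_le_mul_of_nonneg_right (hcoh j (ne_of_mem_erase hj)) (norm_nonneg _)
  rw [← add_sum_erase _ _ (mem_univ i)]
  linarith

theorem hasNullSpaceProperty_of_coherence_le (hunit : ∀ i, ‖g i‖ = 1)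
    (hcoh : Pairwise fun i j => ‖inner 𝕜 (g i) (g j)‖ ≤ ε) {S : Finset ι}
    (hS : 2 * (#S * ε) < 1 + ε) :
    HasNullSpaceProperty (Fintype.linearCombination 𝕜 g) S := by
  intro h hker hne
  have hspread (i : ι) : (1 + ε) * ‖h i‖ ≤ ε * ∑ j, ‖h j‖ :=
    one_add_mul_norm_le_mul_sum_norm (hunit i) (fun _ hj => hcoh hj.symm) hker
  obtain ⟨k, hk⟩ := Function.ne_iff.mp hne
  have hk_pos : 0 < ‖h k‖ := norm_pos_iff.mpr hk
  have hk_le : ‖h k‖ ≤ ∑ j, ‖h j‖ :=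
    single_le_sum (f := fun j => ‖h j‖) (fun j _ => norm_nonneg (h j)) (mem_univ k)
  have hε : 0 < ε := by
    refine pos_of_mul_pos_left (b := ∑ j, ‖h j‖ - ‖h k‖) ?_ (sub_nonneg.mpr hk_le)
    linarith [hspread k]
  have hsum : (1 + ε) * ∑ i ∈ S, ‖h i‖ ≤ #S * ε * ∑ j, ‖h j‖ := by
    rw [mul_sum, mul_assoc, ← nsmul_eq_mul]
    exact sum_le_card_nsmul S _ _ fun i _ => hspread i
  refine lt_of_mul_lt_mul_left (a := 1 + ε) ?_ (by positivity)
  calc (1 + ε) * (2 * ∑ i ∈ S, ‖h i‖)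
      ≤ 2 * (#S * ε) * ∑ j, ‖h j‖ := by linarith
    _ < (1 + ε) * ∑ j, ‖h j‖ := mul_lt_mul_of_pos_right hS (hk_pos.trans_le hk_le)

theorem smv_noiseless_exact_recovery_general (hunit : ∀ i, ‖g i‖ = 1)
    (hcoh : Pairwise fun i j => ‖inner 𝕜 (g i) (g j)‖ ≤ ε) {x y : ι → 𝕜}
    (hsparse : 2 * ({i | x i ≠ 0}.ncard * ε) < 1 + ε)
    (hxy : ∑ i, y i • g i = ∑ i, x i • g i) (hne : y ≠ x) :
    ∑ i, ‖x i‖ < ∑ i, ‖y i‖ := by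
  classical
  rw [Set.ncard_eq_toFinset_card'] at hsparse
  refine (hasNullSpaceProperty_of_coherence_le hunit hcoh hsparse).sum_norm_lt_sum_norm
    (fun i hi => ?_) hxy hne
  simpa only [Set.mem_toFinset, Set.mem_ofPred_eq, not_not] using hi

end Coherence

section Columns

variable {m n : Type*}

lemma inner_toLp_col {𝕜 : Type*} [RCLike 𝕜] [Fintype m] (A : Matrix m n 𝕜) (i j : n) :
    inner 𝕜 (WithLp.toLp 2 (A.col i)) (WithLp.toLp 2 (A.col j)) =
      ∑ k, starRingEnd 𝕜 (A k i) * A k j := by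
  simp only [PiLp.inner_apply, RCLike.inner_apply', Matrix.col_apply]

lemma sum_smul_toLp_col {R : Type*} [CommRing R] [Fintype n] (A : Matrix m n R) (v : n → R) :
    ∑ j, v j • WithLp.toLp 2 (A.col j) = WithLp.toLp 2 (A.mulVec v) := by
  simp only [Matrix.mulVec_eq_sum, WithLp.toLp_sum, op_smul_eq_smul, WithLp.toLp_smul,
    Matrix.col_def]

end Columns

/-- If `γ₀ ∈ ℂ^K` has support of size `M`, `Mε < 1/2`, and `b = Gγ₀`,
then `γ₀` is the unique minimizer of the ℓ1 norm subject to `Gγ = b`: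
any other feasible `γ ≠ γ₀` has strictly larger ℓ1 norm. -/
theorem smv_noiseless_exact_recovery
    (N K : ℕ) (hN : 0 < N) (hK : 0 < K) (ε : ℝ) (hε : 0 < ε)
    (G : Matrix (Fin N) (Fin K) ℂ)
    (hcols : ∀ j : Fin K, l2norm (fun i => G i j) = 1)
    (hcoh : ∀ i j : Fin K, i ≠ j →
      ‖∑ n, (starRingEnd ℂ) (G n i) * G n j‖ < ε)
    (M : ℕ) (γ₀ : Fin K → ℂ)
    (hsupp : {j | γ₀ j ≠ 0}.ncard = M)
    (hMε : (M : ℝ) * ε < 1 / 2)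
    (b : Fin N → ℂ) (hb : b = G.mulVec γ₀) :
    ∀ γ : Fin K → ℂ, G.mulVec γ = b → γ ≠ γ₀ → l1norm γ₀ < l1norm γ := by
  intro γ hγ hne
  exact smv_noiseless_exact_recovery_general (g := fun j => WithLp.toLp 2 (G.col j))
    (fun j => (EuclideanSpace.norm_eq _).trans (hcols j))
    (fun i j hij => (inner_toLp_col G i j).symm ▸ (hcoh i j hij).le)
    (by rw [hsupp]; linarith) (by rw [sum_smul_toLp_col, sum_smul_toLp_col, hγ, hb]) hne
end

section
/- Suppose X₀ ∈ ℂ^{K×ν} has row-support of size M, that Mε < 1/2, and let B = G X₀. Then X₀ is the unique minimizer of J_{2,1} subject to the data constraint: for every X ∈ ℂ^{K×ν} with GX = B and X ≠ X₀ one has J_{2,1}(X₀) < J_{2,1}(X). -/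
/-!
Suppose `G X = G X₀` and let `H = X - X₀`, so that the Gram matrix `Gᴴ G` annihilates `H`. As this
matrix has ones on the diagonal and entries of modulus at most `ε` elsewhere, the norm of each row
of `H` is at most `ε` times the sum of the norms of the other rows. Hence no `M` rows of `H ≠ 0`
can carry half of its total row norm (the null space property), while `X` can have a total row norm
as small as that of `X₀` only if the rows in the support of `X₀` do carry half of that of `H`.
-/

open Finset

/-- The `J_{2,1}` norm of a matrix: sum of the ℓ2 norms of its rows. -/
noncomputable def J21 {K ν : ℕ} (X : Matrix (Fin K) (Fin ν) ℂ) : ℝ :=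
  ∑ i, Real.sqrt (∑ t, ‖X i t‖ ^ 2)

lemma sum_mul_apply_smul {l m n R F : Type*} [Fintype m] [Fintype n] [Semiring R] [AddCommMonoid F]
    [Module R F] (D : Matrix l m R) (A : Matrix m n R) (x : n → F) (i : l) :
    ∑ j, (D * A) i j • x j = ∑ k, D i k • ∑ j, A k j • x j := by
  simp_rw [Matrix.mul_apply, sum_smul, smul_sum, mul_smul]
  exact sum_comm

section NullSpaceProperty

variable {ι R F : Type*} [Fintype ι]

lemma norm_le_mul_sum_erase_of_sum_smul_eq_zero [DecidableEq ι] [SeminormedRing R]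
    [SeminormedAddCommGroup F] [Module R F] [IsBoundedSMul R F] {c : ι → R} {x : ι → F} {ε : ℝ}
    {i : ι} (hi : c i = 1) (hc : ∀ j, i ≠ j → ‖c j‖ ≤ ε) (hx : ∑ j, c j • x j = 0) :
    ‖x i‖ ≤ ε * ∑ j ∈ univ.erase i, ‖x j‖ := by
  have hxi : x i = -∑ j ∈ univ.erase i, c j • x j := by
    rw [← add_sum_erase _ _ (mem_univ i), hi, one_smul] at hx
    exact eq_neg_of_add_eq_zero_left hx
  calc ‖x i‖ = ‖∑ j ∈ univ.erase i, c j • x j‖ := by rw [hxi, norm_neg]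
    _ ≤ ∑ j ∈ univ.erase i, ε * ‖x j‖ := norm_sum_le_of_le _ fun j hj =>
        (norm_smul_le _ _).trans <|
          mul_le_mul_of_nonneg_right (hc j (ne_of_mem_erase hj).symm) (norm_nonneg _)
    _ = ε * ∑ j ∈ univ.erase i, ‖x j‖ := (mul_sum _ _ _).symm

lemma sum_norm_lt_sum_compl_norm_of_incoherent [DecidableEq ι] [SeminormedRing R]
    [NormedAddCommGroup F] [Module R F] [IsBoundedSMul R F] {Γ : Matrix ι ι R} {x : ι → F} {ε : ℝ}
    {S : Finset ι} (hε : 0 ≤ ε) (hdiag : ∀ i, Γ i i = 1) (hoff : ∀ i j, i ≠ j → ‖Γ i j‖ ≤ ε)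
    (hS : (2 * #S - 1) * ε < 1) (hΓx : ∀ i, ∑ j, Γ i j • x j = 0) (hx : x ≠ 0) :
    ∑ i ∈ S, ‖x i‖ < ∑ i ∈ Sᶜ, ‖x i‖ := by
  have htotal : 0 < ∑ i, ‖x i‖ := by
    obtain ⟨i, hi⟩ := Function.ne_iff.1 hx
    exact sum_pos' (fun _ _ => norm_nonneg _) ⟨i, mem_univ i, norm_pos_iff.2 hi⟩
  have hrow (i : ι) : (1 + ε) * ‖x i‖ ≤ ε * ∑ j, ‖x j‖ := by
    have := norm_le_mul_sum_erase_of_sum_smul_eq_zero (hdiag i) (hoff i) (hΓx i)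
    rw [← add_sum_erase _ _ (mem_univ i)]
    linarith
  have hrows : (1 + ε) * ∑ i ∈ S, ‖x i‖ ≤ #S * (ε * ∑ j, ‖x j‖) := by
    rw [mul_sum, ← nsmul_eq_mul]
    exact sum_le_card_nsmul _ _ _ fun i _ => hrow i
  have hhalf : 2 * ∑ i ∈ S, ‖x i‖ < ∑ i, ‖x i‖ := by
    refine lt_of_mul_lt_mul_left ?_ (by positivity : 0 ≤ 1 + ε)
    calc (1 + ε) * (2 * ∑ i ∈ S, ‖x i‖) ≤ 2 * #S * ε * ∑ i, ‖x i‖ := by linarith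
      _ < (1 + ε) * ∑ i, ‖x i‖ := mul_lt_mul_of_pos_right (by linarith) htotal
  linarith [sum_add_sum_compl S fun i => ‖x i‖]

lemma sum_norm_lt_sum_norm_of_sum_norm_sub_lt [DecidableEq ι] [SeminormedAddCommGroup F]
    {x x₀ : ι → F} {S : Finset ι} (hx₀ : ∀ i ∉ S, x₀ i = 0)
    (hS : ∑ i ∈ S, ‖x i - x₀ i‖ < ∑ i ∈ Sᶜ, ‖x i - x₀ i‖) : ∑ i, ‖x₀ i‖ < ∑ i, ‖x i‖ := by
  calc ∑ i, ‖x₀ i‖ = ∑ i ∈ S, ‖x₀ i‖ :=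
        (sum_subset (subset_univ S) fun i _ hi => by rw [hx₀ i hi, norm_zero]).symm
    _ ≤ ∑ i ∈ S, (‖x i‖ + ‖x i - x₀ i‖) := sum_le_sum fun i _ => norm_le_norm_add_norm_sub _ _
    _ < ∑ i ∈ S, ‖x i‖ + ∑ i ∈ Sᶜ, ‖x i - x₀ i‖ := by
        rw [sum_add_distrib]
        exact add_lt_add_right hS _
    _ = ∑ i ∈ S, ‖x i‖ + ∑ i ∈ Sᶜ, ‖x i‖ := by
        congr 1
        exact sum_congr rfl fun i hi => by rw [hx₀ i (mem_compl.1 hi), sub_zero]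
    _ = ∑ i, ‖x i‖ := sum_add_sum_compl S _

/-- Taking `D = Aᴴ` for `A` with unit columns, `hoff` bounds the coherence of `A` and `hsupp` is the
classical condition `M < (1 + ε⁻¹) / 2` on the size `M` of the support. With
`F = PiLp p fun _ : Fin ν => ℂ`, the quantity being minimized is `J_{p,1}`. -/
theorem mmv_noiseless_exact_recovery_J21_general {m : Type*} [Fintype m] [SeminormedRing R]
    [NormedAddCommGroup F] [Module R F] [IsBoundedSMul R F] {A : Matrix m ι R} {D : Matrix ι m R}
    {ε : ℝ} (hε : 0 ≤ ε) (hdiag : ∀ i, (D * A) i i = 1)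
    (hoff : ∀ i j, i ≠ j → ‖(D * A) i j‖ ≤ ε) {x₀ x : ι → F}
    (hsupp : (2 * (Function.support x₀).ncard - 1) * ε < 1)
    (hAx : ∀ k, ∑ j, A k j • x j = ∑ j, A k j • x₀ j) (hne : x ≠ x₀) :
    ∑ i, ‖x₀ i‖ < ∑ i, ‖x i‖ := by
  classical
  have hker (i : ι) : ∑ j, (D * A) i j • (x - x₀) j = 0 := by
    simp [sum_mul_apply_smul, smul_sub, hAx]
  rw [Set.ncard_eq_toFinset_card'] at hsupp
  exact sum_norm_lt_sum_norm_of_sum_norm_sub_lt (fun i hi => by simpa using hi) <|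
    sum_norm_lt_sum_compl_norm_of_incoherent hε hdiag hoff hsupp hker (sub_ne_zero.2 hne)

end NullSpaceProperty

lemma J21_eq_sum_norm_toLp {K ν : ℕ} (X : Matrix (Fin K) (Fin ν) ℂ) :
    J21 X = ∑ i, ‖WithLp.toLp 2 (X i)‖ := by
  simp only [J21, EuclideanSpace.norm_eq]

lemma conjTranspose_mul_self_apply_self {N K : ℕ} (G : Matrix (Fin N) (Fin K) ℂ) (j : Fin K) :
    (G.conjTranspose * G) j j = (l2norm (fun i => G i j) ^ 2 : ℝ) := by
  rw [l2norm, Real.sq_sqrt (by positivity)]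
  simp [Matrix.mul_apply, Complex.conj_mul']

lemma toLp_mul_apply {m n l R : Type*} [Fintype n] [Ring R] (p : ENNReal) (A : Matrix m n R)
    (X : Matrix n l R) (k : m) :
    WithLp.toLp p ((A * X) k) = ∑ j, A k j • WithLp.toLp p (X j) := by
  rw [Matrix.mul_apply_eq_vecMul, Matrix.vecMul_eq_sum, WithLp.toLp_sum]
  simp only [WithLp.toLp_smul]

lemma support_toLp {m n R : Type*} [AddCommGroup R] (p : ENNReal) (X : Matrix m n R) :
    Function.support (fun i => WithLp.toLp p (X i)) = {i | X i ≠ 0} := by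
  ext i
  simp

/-- If `X₀ ∈ ℂ^{K×ν}` has row-support of size `M`, `Mε < 1/2`, and
`B = G X₀`, then `X₀` is the unique minimizer of `J_{2,1}` subject to `GX = B`:
any other feasible `X ≠ X₀` has strictly larger `J_{2,1}` value. -/
theorem mmv_noiseless_exact_recovery_J21
    (N K ν : ℕ) (hN : 0 < N) (hK : 0 < K) (hν : 0 < ν) (ε : ℝ) (hε : 0 < ε)
    (G : Matrix (Fin N) (Fin K) ℂ)
    (hcols : ∀ j : Fin K, l2norm (fun i => G i j) = 1)
    (hcoh : ∀ i j : Fin K, i ≠ j →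
      ‖∑ n, (starRingEnd ℂ) (G n i) * G n j‖ < ε)
    (M : ℕ) (X₀ : Matrix (Fin K) (Fin ν) ℂ)
    (hrowsupp : {i | X₀ i ≠ 0}.ncard = M)
    (hMε : (M : ℝ) * ε < 1 / 2)
    (B : Matrix (Fin N) (Fin ν) ℂ) (hB : B = G * X₀) :
    ∀ X : Matrix (Fin K) (Fin ν) ℂ, G * X = B → X ≠ X₀ → J21 X₀ < J21 X := by
  intro X hX hne
  rw [J21_eq_sum_norm_toLp, J21_eq_sum_norm_toLp]
  exact mmv_noiseless_exact_recovery_J21_general (A := G) (D := G.conjTranspose) hε.le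
    (fun i => by simp [conjTranspose_mul_self_apply_self, hcols])
    (fun i j hij => (hcoh i j hij).le)
    (by rw [support_toLp, hrowsupp]; linarith)
    (fun k => by rw [← toLp_mul_apply, ← toLp_mul_apply, hX, hB])
    ((WithLp.toLp_injective 2).comp_left.ne hne)
end

section
/- Let 1 < p < ∞. Suppose X₀ ∈ ℂ^{K×ν} has row-support of size M, that Mε < 1/2, and let B = G X₀. Then X₀ is the unique minimizer of J_{p,1} subject to the data constraint: for every X ∈ ℂ^{K×ν} with GX = B and X ≠ X₀ one has J_{p,1}(X₀) < J_{p,1}(X). -/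
/-!
Put `H = X - X₀` and let `S` be the sum of the norms of the rows of `H`. Since `G H = 0`, also
`Gᴴ G H = 0`, and the `i`-th row of this equation expresses row `i` of `H` as a combination of the
other rows with coefficients of modulus at most `ε`. Hence every row of `H` has norm at most
`ε S / (1 + ε)`, and the `M` rows in the support of `X₀` carry less than half of `S` as soon as
`2 M ε < 1 + ε`. By the triangle inequality on the support, adding such an `H` to `X₀` costs less
there than it gains off the support. The argument sees `G` only through the unit diagonal and the
small off-diagonal entries of `Gᴴ G`, and the rows only through their norms, so it applies to any
such square matrix and to any norm on the rows.
-/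

open Finset

/-- The `J_{p,1}` norm of a matrix: sum of the ℓp norms of its rows. -/
noncomputable def Jp1 (p : ℝ) {K ν : ℕ} (X : Matrix (Fin K) (Fin ν) ℂ) : ℝ :=
  ∑ i, (∑ t, ‖X i t‖ ^ p) ^ (1 / p)

section NullSpaceProperty

variable {ι E : Type*} [Fintype ι]

theorem sum_norm_lt_sum_norm_of_two_mul_sum_norm_sub_lt [SeminormedAddCommGroup E]
    {T : Finset ι} {x y : ι → E} (hx : ∀ i ∉ T, x i = 0)
    (hT : 2 * ∑ i ∈ T, ‖y i - x i‖ < ∑ i, ‖y i - x i‖) :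
    ∑ i, ‖x i‖ < ∑ i, ‖y i‖ := by
  classical
  have hrow (i : ι) :
      ‖x i‖ + ‖y i - x i‖ ≤ ‖y i‖ + if i ∈ T then 2 * ‖y i - x i‖ else 0 := by
    split_ifs with hi
    · linarith [norm_le_norm_add_norm_sub (y i) (x i)]
    · simp [hx i hi]
  have hsum := sum_le_sum fun i (_ : i ∈ univ) ↦ hrow i
  simp only [sum_add_distrib, sum_ite_mem, univ_inter, ← mul_sum] at hsum
  linarith

variable {𝕜 : Type*} [SeminormedRing 𝕜] {ε : ℝ}

theorem norm_le_mul_sum_norm_sub_of_sum_smul_eq_zero [SeminormedAddCommGroup E] [Module 𝕜 E]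
    [IsBoundedSMul 𝕜 E] {c : ι → 𝕜} {h : ι → E} {i : ι} (hi : c i = 1)
    (hc : ∀ j, i ≠ j → ‖c j‖ ≤ ε) (hsum : ∑ j, c j • h j = 0) :
    ‖h i‖ ≤ ε * (∑ j, ‖h j‖ - ‖h i‖) := by
  classical
  rw [← add_sum_erase _ _ (mem_univ i), hi, one_smul] at hsum
  calc ‖h i‖ = ‖∑ j ∈ univ.erase i, c j • h j‖ := by
        rw [eq_neg_of_add_eq_zero_left hsum, norm_neg]
    _ ≤ ∑ j ∈ univ.erase i, ε * ‖h j‖ := norm_sum_le_of_le _ fun j hj ↦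
        (norm_smul_le _ _).trans <| by gcongr; exact hc j (ne_of_mem_erase hj).symm
    _ = ε * (∑ j, ‖h j‖ - ‖h i‖) := by
        rw [← mul_sum, sum_erase_eq_sub (mem_univ i)]

variable [NormedAddCommGroup E] [Module 𝕜 E] [IsBoundedSMul 𝕜 E] {A : Matrix ι ι 𝕜}

theorem two_mul_sum_norm_lt_sum_norm_of_sum_smul_eq_zero (hdiag : ∀ i, A i i = 1)
    (hoff : ∀ i j, i ≠ j → ‖A i j‖ ≤ ε) {h : ι → E} (hA : ∀ i, ∑ j, A i j • h j = 0)
    (hh : h ≠ 0) {T : Finset ι} (hT : 2 * #T * ε < 1 + ε) :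
    2 * ∑ i ∈ T, ‖h i‖ < ∑ i, ‖h i‖ := by
  have hrow (i : ι) : ‖h i‖ ≤ ε * (∑ j, ‖h j‖ - ‖h i‖) :=
    norm_le_mul_sum_norm_sub_of_sum_smul_eq_zero (hdiag i) (hoff i) (hA i)
  obtain ⟨k, hk⟩ := Function.ne_iff.1 hh
  have hk_pos : 0 < ‖h k‖ := norm_pos_iff.2 hk
  have hk_le : ‖h k‖ ≤ ∑ j, ‖h j‖ :=
    single_le_sum (f := fun j ↦ ‖h j‖) (fun _ _ ↦ norm_nonneg _) (mem_univ k)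
  have hε : 0 < ε := pos_of_mul_pos_left (hk_pos.trans_le (hrow k)) (sub_nonneg.2 hk_le)
  refine lt_of_mul_lt_mul_left (a := 1 + ε) ?_ (by positivity)
  calc (1 + ε) * (2 * ∑ i ∈ T, ‖h i‖) = 2 * ∑ i ∈ T, (1 + ε) * ‖h i‖ := by
        rw [← mul_sum]; ring
    _ ≤ 2 * ∑ _i ∈ T, ε * ∑ j, ‖h j‖ := by
        gcongr 2 * ∑ i ∈ T, ?_ with i; linarith [hrow i]
    _ = 2 * #T * ε * ∑ j, ‖h j‖ := by
        rw [sum_const, nsmul_eq_mul]; ring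
    _ < (1 + ε) * ∑ j, ‖h j‖ := by
        gcongr; exact hk_pos.trans_le hk_le

theorem mmv_noiseless_exact_recovery_Jp1_general (hdiag : ∀ i, A i i = 1)
    (hoff : ∀ i j, i ≠ j → ‖A i j‖ ≤ ε) {X₀ X : ι → E}
    (hsupp : 2 * {i | X₀ i ≠ 0}.ncard * ε < 1 + ε)
    (hA : ∀ i, ∑ j, A i j • X j = ∑ j, A i j • X₀ j) (hne : X ≠ X₀) :
    ∑ i, ‖X₀ i‖ < ∑ i, ‖X i‖ := by
  classical
  have hker (i : ι) : ∑ j, A i j • (X - X₀) j = 0 := by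
    simp only [Pi.sub_apply, smul_sub, sum_sub_distrib, hA, sub_self]
  rw [Set.ncard_eq_toFinset_card'] at hsupp
  exact sum_norm_lt_sum_norm_of_two_mul_sum_norm_sub_lt (by simp)
    (two_mul_sum_norm_lt_sum_norm_of_sum_smul_eq_zero hdiag hoff hker (sub_ne_zero.2 hne) hsupp)

end NullSpaceProperty

theorem Jp1_eq_sum_norm {p : ℝ} (hp : 0 < p) {K ν : ℕ} (X : Matrix (Fin K) (Fin ν) ℂ) :
    Jp1 p X = ∑ i, ‖WithLp.toLp (ENNReal.ofReal p) (X i)‖ := by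
  have hp' : (ENNReal.ofReal p).toReal = p := ENNReal.toReal_ofReal hp.le
  simp only [Jp1, PiLp.norm_eq_sum (hp'.symm ▸ hp), hp']

theorem sum_smul_toLp_eq_toLp_mul {R l m n : Type*} [Ring R] [Fintype m] (p : ENNReal)
    (A : Matrix l m R) (X : Matrix m n R) (i : l) :
    ∑ j, A i j • WithLp.toLp p (X j) = WithLp.toLp p ((A * X) i) := by
  ext t
  simp [Matrix.mul_apply]

theorem Jp1_lt_Jp1_of_mul_eq_mul {p ε : ℝ} (hp : 1 ≤ p) {K ν : ℕ}
    {A : Matrix (Fin K) (Fin K) ℂ} (hdiag : ∀ i, A i i = 1) (hoff : ∀ i j, i ≠ j → ‖A i j‖ ≤ ε)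
    {X₀ X : Matrix (Fin K) (Fin ν) ℂ} (hsupp : 2 * {i | X₀ i ≠ 0}.ncard * ε < 1 + ε)
    (hA : A * X = A * X₀) (hne : X ≠ X₀) : Jp1 p X₀ < Jp1 p X := by
  have : Fact (1 ≤ ENNReal.ofReal p) := ⟨ENNReal.one_le_ofReal.2 hp⟩
  simp only [Jp1_eq_sum_norm (zero_lt_one.trans_le hp)]
  refine mmv_noiseless_exact_recovery_Jp1_general hdiag hoff ?_ (fun i ↦ ?_) fun h ↦
    hne <| funext fun i ↦ WithLp.toLp_injective _ (congrFun h i)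
  · simpa only [ne_eq, WithLp.toLp_eq_zero] using hsupp
  · simp only [sum_smul_toLp_eq_toLp_mul, hA]

theorem star_dotProduct_self_eq_l2norm_sq {n : ℕ} (v : Fin n → ℂ) :
    star v ⬝ᵥ v = (l2norm v : ℂ) ^ 2 := by
  rw [l2norm, ← Complex.ofReal_pow, Real.sq_sqrt (by positivity)]
  simp [dotProduct, Complex.conj_mul']

/-- For `1 < p < ∞`: if `X₀ ∈ ℂ^{K×ν}` has row-support of size `M`,
`Mε < 1/2`, and `B = G X₀`, then `X₀` is the unique minimizer of `J_{p,1}` subject to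
`GX = B`: any other feasible `X ≠ X₀` has strictly larger `J_{p,1}` value. -/
theorem mmv_noiseless_exact_recovery_Jp1
    (N K ν : ℕ) (hN : 0 < N) (hK : 0 < K) (hν : 0 < ν) (ε : ℝ) (hε : 0 < ε)
    (p : ℝ) (hp : 1 < p)
    (G : Matrix (Fin N) (Fin K) ℂ)
    (hcols : ∀ j : Fin K, l2norm (fun i => G i j) = 1)
    (hcoh : ∀ i j : Fin K, i ≠ j →
      ‖∑ n, (starRingEnd ℂ) (G n i) * G n j‖ < ε)
    (M : ℕ) (X₀ : Matrix (Fin K) (Fin ν) ℂ)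
    (hrowsupp : {i | X₀ i ≠ 0}.ncard = M)
    (hMε : (M : ℝ) * ε < 1 / 2)
    (B : Matrix (Fin N) (Fin ν) ℂ) (hB : B = G * X₀) :
    ∀ X : Matrix (Fin K) (Fin ν) ℂ, G * X = B → X ≠ X₀ → Jp1 p X₀ < Jp1 p X := by
  intro X hX hne
  have hdiag (j : Fin K) : (G.conjTranspose * G) j j = 1 :=
    (star_dotProduct_self_eq_l2norm_sq fun n ↦ G n j).trans (by simp [hcols j])
  exact Jp1_lt_Jp1_of_mul_eq_mul hp.le hdiag (fun i j hij ↦ (hcoh i j hij).le)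
    (by rw [hrowsupp]; linarith) (by simp only [Matrix.mul_assoc, hX, hB]) hne
end

section
/- Let 1 < p < ∞ with conjugate exponent q. Let X₀ ∈ ℂ^{K×ν} have row-support Λ, let B = G X₀, and assume the columns {g_j : j ∈ Λ} of G are linearly independent. If there exists a matrix H ∈ ℂ^{N×ν} such that G_Λ* H = sign_p((X₀)_Λ) (where (X₀)_Λ is the submatrix of the rows of X₀ indexed by Λ) and ‖H* g_j‖_{ℓq} < 1 for every j ∉ Λ, then X₀ is the unique minimizer of J_{p,1}(X) over {X ∈ ℂ^{K×ν} : GX = B}. -/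
open Finset

/-- The complex sign: `sign z = z/|z|` for `z ≠ 0` and `sign 0 = 0`. -/
noncomputable def csign (z : ℂ) : ℂ := if z = 0 then 0 else z / (‖z‖ : ℂ)

/-- The `p`-sign of a row `r ∈ ℂ^ν` (with `q` the conjugate exponent of `p`):
entry `t` is `|r_t|^{p−1} sign(r_t) / ‖(|r_1|^{p−1},…,|r_ν|^{p−1})‖_{ℓq}` if `r ≠ 0`,
and `0` if `r = 0`. -/
noncomputable def signRow (p q : ℝ) {ν : ℕ} (r : Fin ν → ℂ) (t : Fin ν) : ℂ :=
  if r = 0 then 0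
  else (((‖r t‖ ^ (p - 1)) / ((∑ s, (‖r s‖ ^ (p - 1)) ^ q) ^ (1 / q)) : ℝ) : ℂ) * csign (r t)

/-!
The pairing `∑ j, ⟨(G* H)_j, X_j⟩ = tr (H* G X)` depends on `X` only through `G X`, so it is
constant on the feasible set. Since `(G* H)_j` norms the `j`-th row of `X₀`, its value is
`J_{p,1}(X₀)`, and Hölder's inequality row by row bounds it by `J_{p,1}(X)`, strictly as soon as `X`
has a nonzero row `j` with `‖(G* H)_j‖_q < 1`. A feasible `X` without such a row is supported, like
`X₀`, on linearly independent columns of `G`, and so equals `X₀`.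
-/

open scoped Matrix

section LpNorm

variable {ι : Type*} [Fintype ι]

/-- The `ℓp` norm of a finite vector for a real exponent `p`, written as in `Jp1` so that
`Jp1 p X` is by definition the sum of the `lpNorm p` of the rows of `X`. -/
noncomputable def lpNorm {E : Type*} [Norm E] (p : ℝ) (r : ι → E) : ℝ :=
  (∑ t, ‖r t‖ ^ p) ^ (1 / p)

lemma lpNorm_nonneg {E : Type*} [SeminormedAddGroup E] (p : ℝ) (r : ι → E) : 0 ≤ lpNorm p r :=
  Real.rpow_nonneg (Finset.sum_nonneg fun _ _ ↦ by positivity) _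

lemma lpNorm_zero {E : Type*} [SeminormedAddGroup E] {p : ℝ} (hp : p ≠ 0) :
    lpNorm p (0 : ι → E) = 0 := by
  simp [lpNorm, Real.zero_rpow, hp]

lemma sum_norm_rpow_pos {E : Type*} [NormedAddGroup E] (p : ℝ) {r : ι → E} (hr : r ≠ 0) :
    0 < ∑ t, ‖r t‖ ^ p := by
  obtain ⟨t, ht⟩ := Function.ne_iff.mp hr
  exact Finset.sum_pos' (fun _ _ ↦ by positivity)
    ⟨t, Finset.mem_univ t, Real.rpow_pos_of_pos (norm_pos_iff.mpr ht) p⟩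

lemma lpNorm_pos {E : Type*} [NormedAddGroup E] (p : ℝ) {r : ι → E} (hr : r ≠ 0) :
    0 < lpNorm p r :=
  Real.rpow_pos_of_pos (sum_norm_rpow_pos p hr) _

variable {𝕜 : Type*} [RCLike 𝕜] {p q : ℝ}

lemma norm_star_dotProduct_le (h : p.HolderConjugate q) (u r : ι → 𝕜) :
    ‖star u ⬝ᵥ r‖ ≤ lpNorm q u * lpNorm p r :=
  calc ‖star u ⬝ᵥ r‖
    _ ≤ ∑ t, ‖star (u t) * r t‖ := norm_sum_le _ _
    _ = ∑ t, ‖u t‖ * ‖r t‖ := by simp only [norm_mul, norm_star]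
    _ ≤ lpNorm q u * lpNorm p r :=
      Real.inner_le_Lp_mul_Lq_of_nonneg _ h.symm (fun _ _ ↦ norm_nonneg _) fun _ _ ↦ norm_nonneg _

/-- `u` is a norming vector for `r`: a subgradient of the `ℓp` norm at `r`, expressed through the
dual exponent `q`. At `r = 0` this says only `‖u‖_q ≤ 1`. -/
structure IsNorming (p q : ℝ) (u r : ι → 𝕜) : Prop where
  lpNorm_le_one : lpNorm q u ≤ 1
  star_dotProduct : star u ⬝ᵥ r = (lpNorm p r : 𝕜)

namespace IsNorming

lemma zero_right (hp : p ≠ 0) {u : ι → 𝕜} (hu : lpNorm q u ≤ 1) : IsNorming p q u 0 where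
  lpNorm_le_one := hu
  star_dotProduct := by rw [dotProduct_zero, lpNorm_zero hp, RCLike.ofReal_zero]

lemma eq_zero_of_lpNorm_lt_one (h : p.HolderConjugate q) {u r : ι → 𝕜} (hur : IsNorming p q u r)
    (hu : lpNorm q u < 1) : r = 0 := by
  by_contra hr
  have hle : lpNorm p r ≤ lpNorm q u * lpNorm p r := by
    simpa only [hur.star_dotProduct, RCLike.norm_of_nonneg (lpNorm_nonneg p r)] using
      norm_star_dotProduct_le h u r
  exact hle.not_gt (mul_lt_of_lt_one_left (lpNorm_pos p hr) hu)

lemma sum_lpNorm_lt_sum_lpNorm {κ : Type*} [Fintype κ] (h : p.HolderConjugate q)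
    {u r₀ r : κ → ι → 𝕜} (hu : ∀ j, IsNorming p q (u j) (r₀ j))
    (hpair : ∑ j, star (u j) ⬝ᵥ r j = ∑ j, star (u j) ⬝ᵥ r₀ j)
    {k : κ} (hk : lpNorm q (u k) < 1) (hrk : r k ≠ 0) :
    ∑ j, lpNorm p (r₀ j) < ∑ j, lpNorm p (r j) := by
  have hvalue : ((∑ j, lpNorm p (r₀ j) : ℝ) : 𝕜) = ∑ j, star (u j) ⬝ᵥ r j := by
    simp only [hpair, (hu _).star_dotProduct, RCLike.ofReal_sum]
  calc ∑ j, lpNorm p (r₀ j)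
    _ = ‖∑ j, star (u j) ⬝ᵥ r j‖ := by
      rw [← hvalue, RCLike.norm_of_nonneg (Finset.sum_nonneg fun j _ ↦ lpNorm_nonneg p (r₀ j))]
    _ ≤ ∑ j, ‖star (u j) ⬝ᵥ r j‖ := norm_sum_le _ _
    _ ≤ ∑ j, lpNorm q (u j) * lpNorm p (r j) :=
      Finset.sum_le_sum fun j _ ↦ norm_star_dotProduct_le h _ _
    _ < ∑ j, lpNorm p (r j) :=
      Finset.sum_lt_sum
        (fun j _ ↦ mul_le_of_le_one_left (lpNorm_nonneg p _) (hu j).lpNorm_le_one)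
        ⟨k, Finset.mem_univ k, mul_lt_of_lt_one_left (lpNorm_pos p hrk) hk⟩

end IsNorming

end LpNorm

section SignRow

variable {ν : ℕ} {p q : ℝ}

lemma star_csign_mul_self (z : ℂ) : star (csign z) * z = ‖z‖ := by
  rcases eq_or_ne z 0 with rfl | hz
  · simp
  · have hz' : (‖z‖ : ℂ) ≠ 0 := by exact_mod_cast norm_ne_zero_iff.mpr hz
    rw [csign, if_neg hz, ← starRingEnd_apply, map_div₀, Complex.conj_ofReal,
      div_mul_eq_mul_div, Complex.conj_mul', div_eq_iff hz', sq]

lemma norm_csign_le_one (z : ℂ) : ‖csign z‖ ≤ 1 := by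
  rcases eq_or_ne z 0 with rfl | hz <;> simp [csign, *]

lemma sum_norm_rpow_sub_one_rpow (h : p.HolderConjugate q) (r : Fin ν → ℂ) :
    ∑ s, (‖r s‖ ^ (p - 1)) ^ q = ∑ s, ‖r s‖ ^ p := by
  simp only [← Real.rpow_mul (norm_nonneg _), h.sub_one_mul_conj]

lemma signRow_apply_of_ne_zero (h : p.HolderConjugate q) {r : Fin ν → ℂ} (hr : r ≠ 0)
    (t : Fin ν) :
    signRow p q r t =
      ((‖r t‖ ^ (p - 1) / (∑ s, ‖r s‖ ^ p) ^ (1 / q) : ℝ) : ℂ) * csign (r t) := by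
  rw [signRow, if_neg hr, sum_norm_rpow_sub_one_rpow h]

lemma lpNorm_signRow_le_one (h : p.HolderConjugate q) {r : Fin ν → ℂ} (hr : r ≠ 0) :
    lpNorm q (signRow p q r) ≤ 1 := by
  have hq : 0 < q := h.symm.pos
  set A := ∑ s, ‖r s‖ ^ p with hA
  have hA_pos : 0 < A := sum_norm_rpow_pos p hr
  have hentry (t : Fin ν) : ‖signRow p q r t‖ ≤ ‖r t‖ ^ (p - 1) / A ^ (1 / q) := by
    rw [signRow_apply_of_ne_zero h hr, norm_mul, Complex.norm_of_nonneg (by positivity)]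
    exact mul_le_of_le_one_right (by positivity) (norm_csign_le_one _)
  refine Real.rpow_le_one (Finset.sum_nonneg fun _ _ ↦ by positivity) ?_ (by positivity)
  calc ∑ t, ‖signRow p q r t‖ ^ q
    _ ≤ ∑ t, (‖r t‖ ^ (p - 1) / A ^ (1 / q)) ^ q := by gcongr with t; exact hentry t
    _ = ∑ t, (‖r t‖ ^ (p - 1)) ^ q / A := Finset.sum_congr rfl fun t _ ↦ by
      rw [Real.div_rpow (by positivity) (by positivity), ← Real.rpow_mul hA_pos.le,
        one_div_mul_cancel hq.ne', Real.rpow_one]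
    _ = 1 := by rw [← Finset.sum_div, sum_norm_rpow_sub_one_rpow h, ← hA, div_self hA_pos.ne']

lemma star_signRow_dotProduct_self (h : p.HolderConjugate q) {r : Fin ν → ℂ} (hr : r ≠ 0) :
    star (signRow p q r) ⬝ᵥ r = (lpNorm p r : ℂ) := by
  set A := ∑ s, ‖r s‖ ^ p with hA
  have hA_pos : 0 < A := sum_norm_rpow_pos p hr
  have hentry (t : Fin ν) :
      star (signRow p q r t) * r t = ((‖r t‖ ^ p / A ^ (1 / q) : ℝ) : ℂ) := by
    have hpow : ‖r t‖ ^ (p - 1) * ‖r t‖ = ‖r t‖ ^ p := by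
      rw [← Real.rpow_add_one' (norm_nonneg _) (by simpa using h.ne_zero), sub_add_cancel]
    rw [signRow_apply_of_ne_zero h hr, star_mul', ← starRingEnd_apply, Complex.conj_ofReal,
      mul_assoc, star_csign_mul_self, ← Complex.ofReal_mul, div_mul_eq_mul_div, hpow]
  have hnorm : A / A ^ (1 / q) = A ^ (1 / p) := by
    rw [div_eq_iff (Real.rpow_pos_of_pos hA_pos _).ne', ← Real.rpow_add hA_pos,
      h.one_div_add_one_div, div_one, Real.rpow_one]
  calc star (signRow p q r) ⬝ᵥ r
    _ = ∑ t, ((‖r t‖ ^ p / A ^ (1 / q) : ℝ) : ℂ) := Finset.sum_congr rfl fun t _ ↦ hentry t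
    _ = (lpNorm p r : ℂ) := by rw [← Complex.ofReal_sum, ← Finset.sum_div, ← hA, hnorm]; rfl

lemma isNorming_signRow (h : p.HolderConjugate q) (r : Fin ν → ℂ) :
    IsNorming p q (signRow p q r) r := by
  rcases eq_or_ne r 0 with rfl | hr
  · have hsign : signRow p q (0 : Fin ν → ℂ) = 0 := funext fun _ ↦ if_pos rfl
    rw [hsign]
    exact .zero_right h.ne_zero ((lpNorm_zero h.symm.ne_zero).trans_le zero_le_one)
  · exact ⟨lpNorm_signRow_le_one h hr, star_signRow_dotProduct_self h hr⟩

end SignRow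

section Matrices

variable {m n ι : Type*}

lemma sum_star_conjTranspose_mul_dotProduct {R : Type*} [CommSemiring R] [StarRing R]
    [Fintype m] [Fintype n] [Fintype ι] (G : Matrix m n R) (H : Matrix m ι R) (X : Matrix n ι R) :
    ∑ j, star ((Gᴴ * H) j) ⬝ᵥ X j = (Hᴴ * (G * X)).trace :=
  calc ∑ j, star ((Gᴴ * H) j) ⬝ᵥ X j
    _ = ((Gᴴ * H)ᴴ * X).trace := Finset.sum_comm
    _ = (Hᴴ * (G * X)).trace := by
      rw [Matrix.conjTranspose_mul, Matrix.conjTranspose_conjTranspose, Matrix.mul_assoc]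

lemma eq_of_mul_eq_mul_of_linearIndepOn_col {R : Type*} [CommRing R] [Fintype n]
    {G : Matrix m n R} {Λ : Finset n} (hind : LinearIndepOn R G.col Λ)
    {X Y : Matrix n ι R} (hX : ∀ j ∉ Λ, X j = 0) (hY : ∀ j ∉ Λ, Y j = 0)
    (hXY : G * X = G * Y) : X = Y := by
  ext j t
  by_cases hj : j ∈ Λ
  · refine sub_eq_zero.mp (linearIndepOn_finset_iff.mp hind (fun k ↦ X k t - Y k t) ?_ j hj)
    ext i
    have hentry : ∑ k, G i k * (X k t - Y k t) = 0 := by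
      simpa only [Matrix.mul_apply, mul_sub, Finset.sum_sub_distrib, sub_eq_zero] using
        congr_fun₂ hXY i t
    rw [Finset.sum_apply, Pi.zero_apply, ← hentry]
    refine (Finset.sum_congr rfl fun k _ ↦ mul_comm _ _).trans
      (Finset.sum_subset (Finset.subset_univ Λ) fun k _ hk ↦ ?_)
    rw [hX k hk, hY k hk, sub_self, mul_zero]
  · rw [hX j hj, hY j hj]

lemma conjTranspose_mul_apply_eq_star {R : Type*} [CommSemiring R] [StarRing R] [Fintype m]
    (G : Matrix m n R) (H : Matrix m ι R) (j : n) (t : ι) :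
    (Gᴴ * H) j t = star (∑ i, starRingEnd R (H i t) * G i j) := by
  simp [Matrix.mul_apply, starRingEnd_apply, mul_comm]

end Matrices

theorem dual_certificate_Jp1_unique_recovery_general
    {𝕜 m n ι : Type*} [RCLike 𝕜] [Fintype m] [Fintype n] [Fintype ι]
    {p q : ℝ} (h : p.HolderConjugate q) {G : Matrix m n 𝕜} {X₀ : Matrix n ι 𝕜} {Λ : Finset n}
    (hind : LinearIndepOn 𝕜 G.col Λ) {H : Matrix m ι 𝕜}
    (hnorming : ∀ j, IsNorming p q ((Gᴴ * H) j) (X₀ j))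
    (hlt : ∀ j ∉ Λ, lpNorm q ((Gᴴ * H) j) < 1)
    {X : Matrix n ι 𝕜} (hX : G * X = G * X₀) (hne : X ≠ X₀) :
    ∑ j, lpNorm p (X₀ j) < ∑ j, lpNorm p (X j) := by
  have hX₀ : ∀ j ∉ Λ, X₀ j = 0 := fun j hj ↦ (hnorming j).eq_zero_of_lpNorm_lt_one h (hlt j hj)
  obtain ⟨k, hk, hXk⟩ : ∃ k ∉ Λ, X k ≠ 0 := by
    by_contra! hsupp
    exact hne (eq_of_mul_eq_mul_of_linearIndepOn_col hind hsupp hX₀ hX)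
  refine IsNorming.sum_lpNorm_lt_sum_lpNorm h hnorming ?_ (hlt k hk) hXk
  rw [sum_star_conjTranspose_mul_dotProduct, sum_star_conjTranspose_mul_dotProduct, hX]

/-- Dual certificate condition for exact recovery by `J_{p,1}`
minimization (`1 < p < ∞`, `1/p + 1/q = 1`): if the columns of `G` indexed by the
row-support `Λ` of `X₀` are linearly independent and there exists `H ∈ ℂ^{N×ν}` with
`G_Λ* H = sign_p((X₀)_Λ)` and `‖H* g_j‖_{ℓq} < 1` for all `j ∉ Λ`, then `X₀` is the
unique minimizer of `J_{p,1}` subject to `GX = G X₀`. -/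
theorem dual_certificate_Jp1_unique_recovery
    (N K ν : ℕ) (hN : 0 < N) (hK : 0 < K) (hν : 0 < ν)
    (p q : ℝ) (hp : 1 < p) (hpq : 1 / p + 1 / q = 1)
    (G : Matrix (Fin N) (Fin K) ℂ)
    (X₀ : Matrix (Fin K) (Fin ν) ℂ)
    (Λ : Finset (Fin K))
    (hΛ : ∀ i : Fin K, X₀ i ≠ 0 ↔ i ∈ Λ)
    (hind : LinearIndependent ℂ (fun j : ↥Λ => fun i => G i (j : Fin K)))
    (B : Matrix (Fin N) (Fin ν) ℂ) (hB : B = G * X₀)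
    (H : Matrix (Fin N) (Fin ν) ℂ)
    (hH1 : ∀ j ∈ Λ, ∀ t : Fin ν,
      ∑ i, (starRingEnd ℂ) (G i j) * H i t = signRow p q (X₀ j) t)
    (hH2 : ∀ j ∉ Λ,
      (∑ t, ‖∑ i, (starRingEnd ℂ) (H i t) * G i j‖ ^ q) ^ (1 / q) < 1) :
    ∀ X : Matrix (Fin K) (Fin ν) ℂ, G * X = B → X ≠ X₀ → Jp1 p X₀ < Jp1 p X := by
  intro X hX hne
  have h : p.HolderConjugate q := Real.holderConjugate_iff.mpr ⟨hp, by simpa using hpq⟩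
  have hsign : ∀ j ∈ Λ, (Gᴴ * H) j = signRow p q (X₀ j) := fun j hj ↦ funext (hH1 j hj)
  have hlt : ∀ j ∉ Λ, lpNorm q ((Gᴴ * H) j) < 1 := fun j hj ↦ by
    simpa only [lpNorm, conjTranspose_mul_apply_eq_star, norm_star] using hH2 j hj
  refine dual_certificate_Jp1_unique_recovery_general h hind (fun j ↦ ?_) hlt (hX.trans hB) hne
  by_cases hj : j ∈ Λ
  · rw [hsign j hj]
    exact isNorming_signRow h _
  · rw [not_not.mp (mt (hΛ j).mp hj)]
    exact IsNorming.zero_right h.ne_zero (hlt j hj).le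
end

section
/- Let Λ ⊆ {1,…,K} with |Λ| = M and Mε < 1 (so that G_Λ*G_Λ is invertible). Let 1 < p < ∞ with conjugate exponent q, and let S ∈ ℂ^{M×ν} be any matrix each of whose rows has ℓq-norm at most 1. Then the matrix H = G_Λ (G_Λ*G_Λ)^{−1} S satisfies G_Λ* H = S, and for every j ∉ Λ, ‖H* g_j‖_{ℓq} = ‖S* (G_Λ*G_Λ)^{−1} G_Λ* g_j‖_{ℓq} ≤ Mε/(1 − Mε); in particular, if Mε < 1/2 then ‖H* g_j‖_{ℓq} < 1 for all j ∉ Λ. -/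
open Finset

/-!
The columns of `Φ = G_Λ` have unit norm and pairwise inner products at most `ε`, so each column of
the Gram matrix `A = Φ* Φ` is diagonally dominant with margin `c = 1 - (M - 1) ε`. A margin `c > 0`
makes `A` invertible (Gershgorin), whence `Φ* H = A A⁻¹ S = S`, and it gives
`c ‖w‖₁ ≤ ‖A w‖₁` for every vector `w`, that is `‖A⁻¹ b‖₁ ≤ ‖b‖₁ / c`.

As `A` is Hermitian, `H* g = S* w` with `w = A⁻¹ Φ* g`. This is a combination, with coefficients
`w`, of the conjugated rows of `S`, which lie in the unit ball of `ℓq`, so its norm is at most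
`‖w‖₁ ≤ ‖Φ* g‖₁ / c ≤ M ε / c`.
-/

open scoped Matrix ENNReal

section DiagonallyDominant

variable {ι K : Type*} [Fintype ι] [DecidableEq ι] [NormedField K] {A : Matrix ι ι K} {c : ℝ}

theorem mul_sum_norm_le_sum_norm_mulVec
    (hA : ∀ k, c + ∑ i ∈ univ.erase k, ‖A i k‖ ≤ ‖A k k‖) (w : ι → K) :
    c * ∑ k, ‖w k‖ ≤ ∑ i, ‖(A *ᵥ w) i‖ := by
  have row_bound (i : ι) :
      ‖A i i * w i‖ - ∑ k ∈ univ.erase i, ‖A i k * w k‖ ≤ ‖(A *ᵥ w) i‖ := by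
    have split : (A *ᵥ w) i = A i i * w i + ∑ k ∈ univ.erase i, A i k * w k :=
      (add_sum_erase _ (fun k => A i k * w k) (mem_univ i)).symm
    rw [split]
    exact (sub_le_sub_left (norm_sum_le _ _) _).trans (norm_sub_le_norm_add _ _)
  calc c * ∑ k, ‖w k‖
      ≤ ∑ k, (‖A k k‖ - ∑ i ∈ univ.erase k, ‖A i k‖) * ‖w k‖ := by
        rw [mul_sum]
        gcongr with k
        exact le_sub_iff_add_le.2 (hA k)
    _ = ∑ i, (‖A i i * w i‖ - ∑ k ∈ univ.erase i, ‖A i k * w k‖) := by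
        simp only [sub_mul, sum_mul, sum_sub_distrib, norm_mul]
        congr 1
        exact sum_comm' (by simp [eq_comm])
    _ ≤ ∑ i, ‖(A *ᵥ w) i‖ := sum_le_sum fun i _ => row_bound i

theorem isUnit_det_of_add_sum_norm_le (hc : 0 < c)
    (hA : ∀ k, c + ∑ i ∈ univ.erase k, ‖A i k‖ ≤ ‖A k k‖) : IsUnit A.det :=
  (det_ne_zero_of_sum_col_lt_diag fun k => (lt_add_of_pos_left _ hc).trans_le (hA k)).isUnit

theorem sum_norm_inv_mulVec_le (hc : 0 < c)
    (hA : ∀ k, c + ∑ i ∈ univ.erase k, ‖A i k‖ ≤ ‖A k k‖) (b : ι → K) :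
    ∑ i, ‖(A⁻¹ *ᵥ b) i‖ ≤ (∑ i, ‖b i‖) / c := by
  have h := mul_sum_norm_le_sum_norm_mulVec hA (A⁻¹ *ᵥ b)
  rwa [Matrix.mulVec_mulVec, Matrix.mul_nonsing_inv _ (isUnit_det_of_add_sum_norm_le hc hA),
    Matrix.one_mulVec, ← le_div_iff₀' hc] at h

theorem one_sub_card_sub_one_mul_add_sum_norm_le {ε : ℝ} (hdiag : ∀ i, A i i = 1)
    (hoff : ∀ i k, i ≠ k → ‖A i k‖ ≤ ε) (k : ι) :
    1 - (Fintype.card ι - 1) * ε + ∑ i ∈ univ.erase k, ‖A i k‖ ≤ ‖A k k‖ := by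
  have hsum : ∑ i ∈ univ.erase k, ‖A i k‖ ≤ (Fintype.card ι - 1) * ε :=
    calc ∑ i ∈ univ.erase k, ‖A i k‖ ≤ #(univ.erase k) • ε :=
          sum_le_card_nsmul _ _ _ fun i hi => hoff i k (ne_of_mem_erase hi)
      _ = (Fintype.card ι - 1) * ε := by
          rw [nsmul_eq_mul, cast_card_erase_of_mem (mem_univ k), card_univ]
  rw [hdiag, norm_one]
  linarith

end DiagonallyDominant

section LpNorm

variable {τ : Type*} [Fintype τ] {q : ℝ≥0∞}

theorem norm_toLp_ofReal {E : Type*} [SeminormedAddCommGroup E] {r : ℝ} (hr : 0 < r)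
    (f : τ → E) :
    ‖WithLp.toLp (ENNReal.ofReal r) f‖ = (∑ t, ‖f t‖ ^ r) ^ (1 / r) := by
  have hr' : (ENNReal.ofReal r).toReal = r := ENNReal.toReal_ofReal hr.le
  rw [PiLp.norm_eq_sum (hr'.symm ▸ hr), hr']

variable [Fact (1 ≤ q)]

theorem norm_toLp_star {𝕜 : Type*} [RCLike 𝕜] (v : τ → 𝕜) :
    ‖WithLp.toLp q (star v)‖ = ‖WithLp.toLp q v‖ :=
  (LinearIsometryEquiv.piLpCongrRight q fun _ : τ => RCLike.conjLIE (K := 𝕜)).norm_map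
    (WithLp.toLp q v)

theorem norm_toLp_mulVec_le {ι K : Type*} [Fintype ι] [NormedField K] {T : Matrix τ ι K}
    (hT : ∀ i, ‖WithLp.toLp q (T.col i)‖ ≤ 1) (w : ι → K) :
    ‖WithLp.toLp q (T *ᵥ w)‖ ≤ ∑ i, ‖w i‖ := by
  have hcomb : WithLp.toLp q (T *ᵥ w) = ∑ i, w i • WithLp.toLp q (T.col i) := by
    ext t
    simp [Matrix.mulVec, dotProduct, mul_comm]
  rw [hcomb]
  refine norm_sum_le_of_le _ fun i _ => ?_
  rw [norm_smul]
  exact mul_le_of_le_one_right (norm_nonneg _) (hT i)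

end LpNorm

section DualCertificate

variable {n ι τ 𝕜 : Type*} [Fintype n] [Fintype ι] [DecidableEq ι] [RCLike 𝕜]

/-- The dual certificate `Φ (Φ* Φ)⁻¹ S` interpolating `S` on the columns of `Φ`: when these are
linearly independent, it is the matrix `H` of least Frobenius norm with `Φ* H = S`. The inverse
is Mathlib's `Matrix.inv`, which is `0` when the Gram matrix `Φ* Φ` is singular. -/
noncomputable def dualCertificate (Φ : Matrix n ι 𝕜) (S : Matrix ι τ 𝕜) : Matrix n τ 𝕜 :=
  Φ * ((Φᴴ * Φ)⁻¹ * S)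

theorem conjTranspose_mul_dualCertificate {Φ : Matrix n ι 𝕜} (hΦ : IsUnit (Φᴴ * Φ).det)
    (S : Matrix ι τ 𝕜) : Φᴴ * dualCertificate Φ S = S := by
  rw [dualCertificate, ← Matrix.mul_assoc, Matrix.mul_nonsing_inv_cancel_left _ _ hΦ]

theorem conjTranspose_dualCertificate (Φ : Matrix n ι 𝕜) (S : Matrix ι τ 𝕜) :
    (dualCertificate Φ S)ᴴ = Sᴴ * ((Φᴴ * Φ)⁻¹ * Φᴴ) := by
  simp only [dualCertificate, Matrix.conjTranspose_mul, Matrix.conjTranspose_nonsing_inv,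
    Matrix.conjTranspose_conjTranspose, Matrix.mul_assoc]

theorem norm_conjTranspose_dualCertificate_mulVec_le [Fintype τ] {Φ : Matrix n ι 𝕜}
    {S : Matrix ι τ 𝕜} {c : ℝ} {q : ℝ≥0∞} [Fact (1 ≤ q)] (hc : 0 < c)
    (hΦ : ∀ k, c + ∑ i ∈ univ.erase k, ‖(Φᴴ * Φ) i k‖ ≤ ‖(Φᴴ * Φ) k k‖)
    (hS : ∀ i, ‖WithLp.toLp q (S i)‖ ≤ 1) (g : n → 𝕜) :
    ‖WithLp.toLp q ((dualCertificate Φ S)ᴴ *ᵥ g)‖ ≤ (∑ i, ‖(Φᴴ *ᵥ g) i‖) / c := by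
  have hcol (i : ι) : ‖WithLp.toLp q (Sᴴ.col i)‖ ≤ 1 := (norm_toLp_star (S i)).trans_le (hS i)
  rw [conjTranspose_dualCertificate, ← Matrix.mulVec_mulVec, ← Matrix.mulVec_mulVec]
  exact (norm_toLp_mulVec_le hcol _).trans (sum_norm_inv_mulVec_le hc hΦ _)

end DualCertificate

theorem dual_certificate_construction_coherence_general {n κ τ 𝕜 : Type*} [Fintype n]
    [DecidableEq κ] [Fintype τ] [RCLike 𝕜] {G : Matrix n κ 𝕜} {ε : ℝ}
    (hdiag : ∀ j, (Gᴴ * G) j j = 1) (hcoh : ∀ i j, i ≠ j → ‖(Gᴴ * G) i j‖ ≤ ε)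
    {Λ : Finset κ} (hΛ : (#Λ - 1) * ε < 1) {q : ℝ≥0∞} [Fact (1 ≤ q)] {S : Matrix Λ τ 𝕜}
    (hS : ∀ i, ‖WithLp.toLp q (S i)‖ ≤ 1) {Φ : Matrix n Λ 𝕜}
    (hΦ : Φ = G.submatrix id (↑)) :
    Φᴴ * dualCertificate Φ S = S ∧
    (∀ j ∉ Λ, ‖WithLp.toLp q ((dualCertificate Φ S)ᴴ *ᵥ G.col j)‖ ≤
      #Λ * ε / (1 - (#Λ - 1) * ε)) ∧
    ((2 * #Λ - 1) * ε < 1 →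
      ∀ j ∉ Λ, ‖WithLp.toLp q ((dualCertificate Φ S)ᴴ *ᵥ G.col j)‖ < 1) := by
  have hgram (i k : Λ) : (Φᴴ * Φ) i k = (Gᴴ * G) i k := by rw [hΦ]; rfl
  have hcross (i : Λ) (j : κ) : (Φᴴ *ᵥ G.col j) i = (Gᴴ * G) i j := by rw [hΦ]; rfl
  have hc : 0 < 1 - (#Λ - 1) * ε := sub_pos.2 hΛ
  have hdom (k : Λ) :
      1 - (#Λ - 1) * ε + ∑ i ∈ univ.erase k, ‖(Φᴴ * Φ) i k‖ ≤ ‖(Φᴴ * Φ) k k‖ := by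
    simpa only [Fintype.card_coe] using one_sub_card_sub_one_mul_add_sum_norm_le
      (fun i => (hgram i i).trans (hdiag i))
      (fun i k hik => hgram i k ▸ hcoh i k (Subtype.coe_ne_coe.2 hik)) k
  have hcorr (j : κ) (hj : j ∉ Λ) : ∑ i, ‖(Φᴴ *ᵥ G.col j) i‖ ≤ #Λ * ε := by
    simpa [hcross] using
      sum_le_card_nsmul univ _ ε fun (i : Λ) _ => hcoh i j (ne_of_mem_of_not_mem i.2 hj)
  have hbound (j : κ) (hj : j ∉ Λ) :
      ‖WithLp.toLp q ((dualCertificate Φ S)ᴴ *ᵥ G.col j)‖ ≤ #Λ * ε / (1 - (#Λ - 1) * ε) :=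
    (norm_conjTranspose_dualCertificate_mulVec_le hc hdom hS _).trans <|
      div_le_div_of_nonneg_right (hcorr j hj) hc.le
  refine ⟨conjTranspose_mul_dualCertificate (isUnit_det_of_add_sum_norm_le hc hdom) S, hbound,
    fun hhalf j hj => (hbound j hj).trans_lt ?_⟩
  rw [div_lt_one hc]
  linarith

/-- Coherence-based construction of a dual certificate: with `|Λ| = M`,
`Mε < 1`, `1 < p < ∞`, `1/p + 1/q = 1`, and `S` a matrix whose rows have ℓq-norm at
most 1, the matrix `H = G_Λ (G_Λ*G_Λ)⁻¹ S` satisfies `G_Λ* H = S`, and for every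
`j ∉ Λ`, `‖H* g_j‖_{ℓq} = ‖S* (G_Λ*G_Λ)⁻¹ G_Λ* g_j‖_{ℓq} ≤ Mε/(1 − Mε)`; in
particular if `Mε < 1/2` then `‖H* g_j‖_{ℓq} < 1` for all `j ∉ Λ`. -/
theorem dual_certificate_construction_coherence
    (N K ν : ℕ) (hN : 0 < N) (hK : 0 < K) (hν : 0 < ν) (ε : ℝ) (hε : 0 < ε)
    (G : Matrix (Fin N) (Fin K) ℂ)
    (hcols : ∀ j : Fin K, Real.sqrt (∑ i, ‖G i j‖ ^ 2) = 1)
    (hcoh : ∀ i j : Fin K, i ≠ j →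
      ‖∑ n, (starRingEnd ℂ) (G n i) * G n j‖ < ε)
    (Λ : Finset (Fin K)) (M : ℕ) (hcard : Λ.card = M) (hM : (M : ℝ) * ε < 1)
    (p q : ℝ) (hp : 1 < p) (hpq : 1 / p + 1 / q = 1)
    (S : Matrix ↥Λ (Fin ν) ℂ)
    (hS : ∀ i : ↥Λ, (∑ t, ‖S i t‖ ^ q) ^ (1 / q) ≤ 1)
    (GΛ : Matrix (Fin N) ↥Λ ℂ)
    (hGΛ : GΛ = Matrix.of fun (i : Fin N) (j : ↥Λ) => G i (j : Fin K))
    (H : Matrix (Fin N) (Fin ν) ℂ)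
    (hH : H = GΛ * ((GΛ.conjTranspose * GΛ)⁻¹ * S)) :
    GΛ.conjTranspose * H = S ∧
    (∀ j ∉ Λ,
      (∑ t, ‖∑ i, (starRingEnd ℂ) (H i t) * G i j‖ ^ q) ^ (1 / q) =
        (∑ t, ‖(S.conjTranspose * ((GΛ.conjTranspose * GΛ)⁻¹ * GΛ.conjTranspose)).mulVec
          (fun n => G n j) t‖ ^ q) ^ (1 / q) ∧
      (∑ t, ‖∑ i, (starRingEnd ℂ) (H i t) * G i j‖ ^ q) ^ (1 / q) ≤
        (M : ℝ) * ε / (1 - (M : ℝ) * ε)) ∧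
    ((M : ℝ) * ε < 1 / 2 → ∀ j ∉ Λ,
      (∑ t, ‖∑ i, (starRingEnd ℂ) (H i t) * G i j‖ ^ q) ^ (1 / q) < 1) := by
  have hq : 1 < q := (Real.holderConjugate_iff.2 ⟨hp, by simpa using hpq⟩).symm.lt
  have : Fact (1 ≤ ENNReal.ofReal q) := ⟨ENNReal.one_le_ofReal.2 hq.le⟩
  have hdiag (j : Fin K) : (G.conjTranspose * G) j j = 1 := by
    simpa [Matrix.mul_apply, Complex.conj_mul'] using
      congrArg Complex.ofReal (Real.sqrt_eq_one.1 (hcols j))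
  replace hH : H = dualCertificate GΛ S := hH
  subst hcard
  simp only [← norm_toLp_ofReal (zero_lt_one.trans hq)] at hS ⊢
  obtain ⟨hinterp, hbound, hlt⟩ := dual_certificate_construction_coherence_general hdiag
    (fun i j hij => (hcoh i j hij).le) (by linarith) hS hGΛ
  rw [← conjTranspose_dualCertificate, hH]
  refine ⟨hinterp, fun j hj => ⟨rfl, (hbound j hj).trans ?_⟩, fun hhalf => hlt (by linarith)⟩
  gcongr
  linarith
end

section
/- Let Λ ⊆ {1,…,K} with |Λ| = M and (M−1)ε < 1. Then the columns {g_j : j ∈ Λ} are linearly independent, the Gram matrix G_Λ*G_Λ is invertible, and its inverse satisfies ‖(G_Λ*G_Λ)^{−1}‖_{1→1} ≤ 1/(1 − (M−1)ε), where ‖A‖_{1→1} = sup_{v≠0} ‖Av‖_{ℓ1}/‖v‖_{ℓ1} is the induced ℓ1 operator norm. -/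
open Finset

/-!
The Gram matrix has unit diagonal and off-diagonal entries of modulus at most `ε`, so each of its
columns is diagonally dominant with margin `δ = 1 - (M - 1) ε > 0`. Summing the reverse triangle
inequality `‖A i i * v i‖ - ∑ j ≠ i, ‖A i j * v j‖ ≤ ‖(A v) i‖` over the rows and regrouping by
columns gives `δ ‖v‖₁ ≤ ‖A v‖₁`; taking `v = A⁻¹ w` bounds the inverse by `1 / δ`.
-/

open Matrix

section L1OpNorm

variable {m n : Type*} [Fintype m] [Fintype n]

/-- The operator norm `‖A‖_{1→1}` of a matrix acting on column vectors, both sides carrying the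
`ℓ¹` norm. The defining supremum is real-valued: it is `0` when there are no nonzero vectors. -/
noncomputable def l1OpNorm {R : Type*} [NonUnitalSeminormedRing R] (A : Matrix m n R) : ℝ :=
  ⨆ v : {v : n → R // v ≠ 0}, (∑ i, ‖(A *ᵥ v.1) i‖) / ∑ j, ‖v.1 j‖

lemma l1OpNorm_le {R : Type*} [NonUnitalSeminormedRing R] {A : Matrix m n R} {C : ℝ} (hC : 0 ≤ C)
    (h : ∀ v, ∑ i, ‖(A *ᵥ v) i‖ ≤ C * ∑ j, ‖v j‖) : l1OpNorm A ≤ C :=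
  Real.iSup_le (fun v ↦ div_le_of_le_mul₀ (sum_nonneg fun _ _ ↦ norm_nonneg _) hC (h v)) hC

lemma l1OpNorm_inv_le [DecidableEq n] {R : Type*} [SeminormedCommRing R] {A : Matrix n n R} {δ : ℝ}
    (hδ : 0 < δ) (hA : IsUnit A) (h : ∀ v, δ * ∑ j, ‖v j‖ ≤ ∑ i, ‖(A *ᵥ v) i‖) :
    l1OpNorm A⁻¹ ≤ δ⁻¹ := by
  refine l1OpNorm_le (inv_nonneg.mpr hδ.le) fun w ↦ (le_inv_mul_iff₀ hδ).mpr ?_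
  have hA_inv : A *ᵥ A⁻¹ *ᵥ w = w := by
    rw [mulVec_mulVec, mul_nonsing_inv A ((isUnit_iff_isUnit_det A).mp hA), one_mulVec]
  simpa only [hA_inv] using h (A⁻¹ *ᵥ w)

end L1OpNorm

section ColumnDominance

variable {n R : Type*} [Fintype n] [DecidableEq n]

lemma norm_diag_sub_sum_norm_le_norm_mulVec [NonUnitalSeminormedRing R] [NormMulClass R]
    (A : Matrix n n R) (v : n → R) (i : n) :
    ‖A i i‖ * ‖v i‖ - ∑ j ∈ univ.erase i, ‖A i j‖ * ‖v j‖ ≤ ‖(A *ᵥ v) i‖ := by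
  have hrow : (A *ᵥ v) i = A i i * v i + ∑ j ∈ univ.erase i, A i j * v j :=
    (add_sum_erase _ _ (mem_univ i)).symm
  have hoff : ‖∑ j ∈ univ.erase i, A i j * v j‖ ≤ ∑ j ∈ univ.erase i, ‖A i j‖ * ‖v j‖ :=
    norm_sum_le_of_le _ fun j _ ↦ norm_mul_le _ _
  have hdiag : ‖A i i‖ * ‖v i‖ ≤ ‖(A *ᵥ v) i‖ + ‖∑ j ∈ univ.erase i, A i j * v j‖ := by
    rw [← norm_mul, ← sub_eq_iff_eq_add.mpr hrow]
    exact norm_sub_le _ _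
  linarith

lemma mul_sum_norm_le_sum_norm_mulVec_s16 [NonUnitalSeminormedRing R] [NormMulClass R]
    {A : Matrix n n R} {δ : ℝ} (hA : ∀ j, δ + ∑ i ∈ univ.erase j, ‖A i j‖ ≤ ‖A j j‖)
    (v : n → R) : δ * ∑ j, ‖v j‖ ≤ ∑ i, ‖(A *ᵥ v) i‖ := by
  have hswap : ∑ j, ∑ i ∈ univ.erase j, ‖A i j‖ * ‖v j‖ =
      ∑ i, ∑ j ∈ univ.erase i, ‖A i j‖ * ‖v j‖ :=
    sum_comm' fun i j ↦ by simp [eq_comm]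
  calc δ * ∑ j, ‖v j‖
    _ ≤ ∑ j, (‖A j j‖ - ∑ i ∈ univ.erase j, ‖A i j‖) * ‖v j‖ := by
      rw [mul_sum]
      gcongr with j
      exact le_sub_iff_add_le.mpr (hA j)
    _ = ∑ i, (‖A i i‖ * ‖v i‖ - ∑ j ∈ univ.erase i, ‖A i j‖ * ‖v j‖) := by
      simp only [sub_mul, sum_mul, sum_sub_distrib, hswap]
    _ ≤ ∑ i, ‖(A *ᵥ v) i‖ := sum_le_sum fun i _ ↦ norm_diag_sub_sum_norm_le_norm_mulVec A v i

end ColumnDominance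

section Coherence

variable {𝕜 E ι : Type*} [RCLike 𝕜] [SeminormedAddCommGroup E] [InnerProductSpace 𝕜 E]
  [Fintype ι] [DecidableEq ι] {v : ι → E} {ε : ℝ}

lemma add_sum_norm_gram_le_norm_diag (hv : ∀ i, ‖v i‖ = 1)
    (hcoh : ∀ i j, i ≠ j → ‖inner 𝕜 (v i) (v j)‖ ≤ ε) (j : ι) :
    1 - ((Fintype.card ι : ℝ) - 1) * ε + ∑ i ∈ univ.erase j, ‖gram 𝕜 v i j‖ ≤ ‖gram 𝕜 v j j‖ := by
  have hdiag : ‖gram 𝕜 v j j‖ = 1 := by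
    rw [gram_apply, inner_self_eq_norm_sq_to_K, hv, RCLike.ofReal_one, one_pow, norm_one]
  have hoff : ∑ i ∈ univ.erase j, ‖gram 𝕜 v i j‖ ≤ #(univ.erase j) • ε :=
    sum_le_card_nsmul _ _ _ fun i hi ↦ hcoh i j (ne_of_mem_erase hi)
  rw [nsmul_eq_mul, cast_card_erase_of_mem (mem_univ j), card_univ] at hoff
  linarith

theorem gram_invertible_and_inverse_l1_bound_general (hv : ∀ i, ‖v i‖ = 1)
    (hcoh : ∀ i j, i ≠ j → ‖inner 𝕜 (v i) (v j)‖ ≤ ε)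
    (hε : ((Fintype.card ι : ℝ) - 1) * ε < 1) :
    LinearIndependent 𝕜 v ∧ IsUnit (gram 𝕜 v) ∧
      l1OpNorm (gram 𝕜 v)⁻¹ ≤ 1 / (1 - ((Fintype.card ι : ℝ) - 1) * ε) := by
  have hdom := add_sum_norm_gram_le_norm_diag hv hcoh
  have hδ := sub_pos.mpr hε
  have hdet : (gram 𝕜 v).det ≠ 0 :=
    det_ne_zero_of_sum_col_lt_diag fun j ↦ (lt_add_of_pos_left _ hδ).trans_le (hdom j)
  have hunit : IsUnit (gram 𝕜 v) := (isUnit_iff_isUnit_det _).mpr hdet.isUnit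
  refine ⟨linearIndependent_of_det_gram_ne_zero hdet, hunit, ?_⟩
  rw [one_div]
  exact l1OpNorm_inv_le hδ hunit (mul_sum_norm_le_sum_norm_mulVec_s16 hdom)

end Coherence

lemma gram_toLp_col {𝕜 m n : Type*} [RCLike 𝕜] [Fintype m] (A : Matrix m n 𝕜) :
    gram 𝕜 (fun j ↦ WithLp.toLp 2 (A.col j)) = Aᴴ * A :=
  gram_eq_conjTranspose_mul (EuclideanSpace.basisFun m 𝕜) _

/-- With `|Λ| = M` and `(M−1)ε < 1`, the columns `{g_j : j ∈ Λ}` are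
linearly independent, the Gram matrix `G_Λ*G_Λ` is invertible, and
`‖(G_Λ*G_Λ)⁻¹‖_{1→1} ≤ 1/(1 − (M−1)ε)`, where
`‖A‖_{1→1} = sup_{v≠0} ‖Av‖₁/‖v‖₁`. -/
theorem gram_invertible_and_inverse_l1_bound
    (N K : ℕ) (hN : 0 < N) (hK : 0 < K) (ε : ℝ) (hε : 0 < ε)
    (G : Matrix (Fin N) (Fin K) ℂ)
    (hcols : ∀ j : Fin K, Real.sqrt (∑ i, ‖G i j‖ ^ 2) = 1)
    (hcoh : ∀ i j : Fin K, i ≠ j →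
      ‖∑ n, (starRingEnd ℂ) (G n i) * G n j‖ < ε)
    (Λ : Finset (Fin K)) (M : ℕ) (hcard : Λ.card = M)
    (hM : ((M : ℝ) - 1) * ε < 1)
    (GΛ : Matrix (Fin N) ↥Λ ℂ)
    (hGΛ : GΛ = Matrix.of fun (i : Fin N) (j : ↥Λ) => G i (j : Fin K)) :
    LinearIndependent ℂ (fun j : ↥Λ => fun i => G i (j : Fin K)) ∧
    IsUnit (GΛ.conjTranspose * GΛ) ∧
    (⨆ v : {v : ↥Λ → ℂ // v ≠ 0},
        (∑ i, ‖((GΛ.conjTranspose * GΛ)⁻¹).mulVec v.1 i‖) / (∑ i, ‖v.1 i‖)) ≤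
      1 / (1 - ((M : ℝ) - 1) * ε) := by
  subst hcard hGΛ
  obtain ⟨hli, hgram⟩ := gram_invertible_and_inverse_l1_bound_general (𝕜 := ℂ) (ε := ε)
    (v := fun j ↦ WithLp.toLp 2 ((G.submatrix id ((↑) : Λ → Fin K)).col j))
    (fun j ↦ (EuclideanSpace.norm_eq _).trans (hcols j))
    (fun i j hij ↦ (congrArg norm (congrFun₂ (gram_toLp_col G) i j)).trans_le
      (hcoh i j (Subtype.coe_ne_coe.mpr hij)).le)
    (by rwa [Fintype.card_coe])
  rw [gram_toLp_col, Fintype.card_coe] at hgram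
  exact ⟨hli.map' _ (WithLp.linearEquiv 2 ℂ (Fin N → ℂ)).ker, hgram⟩
end

section
/- Let Λ ⊆ {1,…,K} with |Λ| = M and (M−1)ε < 1. Then for every vector v supported on Λ, ‖Gv‖_{ℓ2}² ≥ (1 − (M−1)ε)‖v‖_{ℓ2}²; consequently, for every matrix X ∈ ℂ^{K×ν} with rowsupp(X) ⊆ Λ, ‖X‖_F ≤ ‖GX‖_F / sqrt(1 − (M−1)ε). -/
open Finset

/-- The Frobenius norm of a complex matrix. -/
noncomputable def frob {α β : Type*} [Fintype α] [Fintype β]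
    (X : Matrix α β ℂ) : ℝ :=
  Real.sqrt (∑ i, ∑ t, ‖X i t‖ ^ 2)

/-!
Expand `‖∑ i, v i • g i‖²` into the inner products `⟪v i • g i, v j • g j⟫`. The diagonal
contributes `‖g i‖² |v i|²`, and AM-GM bounds each off-diagonal real part below by
`-|⟪g i, g j⟫| (|v i|² + |v j|²) / 2`. Symmetry of `|⟪g i, g j⟫|` collects this into the quadratic
form analogue of Gershgorin's theorem: the weight of `|v i|²` is at least `‖g i‖²` minus the
off-diagonal absolute row sum of the Gram matrix, which for unit vectors of coherence `ε` is at
least `1 - (M - 1) ε`. The Frobenius bound is the vector bound summed over the columns of `X`.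
-/

lemma sum_sum_erase_mul_add_div_two {ι R : Type*} [DecidableEq ι] [Semifield R] [NeZero (2 : R)]
    (s : Finset ι) {c : ι → ι → R} (hc : ∀ i j, c i j = c j i) (a : ι → R) :
    ∑ i ∈ s, ∑ j ∈ s.erase i, c i j * ((a i + a j) / 2) =
      ∑ i ∈ s, (∑ j ∈ s.erase i, c i j) * a i := by
  have swap : ∑ i ∈ s, ∑ j ∈ s.erase i, c i j * a j = ∑ i ∈ s, ∑ j ∈ s.erase i, c i j * a i := by
    rw [sum_comm' (t' := s) (s' := fun j => s.erase j) (by grind)]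
    simp only [hc]
  have split (i j : ι) : c i j * ((a i + a j) / 2) = (c i j * a i + c i j * a j) / 2 := by ring
  simp only [split, ← sum_div, sum_add_distrib, swap, add_self_div_two, sum_mul]

section InnerProductSpace

variable {𝕜 E ι : Type*} [RCLike 𝕜] [SeminormedAddCommGroup E] [InnerProductSpace 𝕜 E]

lemma neg_norm_inner_mul_le_re_inner_smul_smul (a b : 𝕜) (x y : E) :
    -(‖inner 𝕜 x y‖ * ((‖a‖ ^ 2 + ‖b‖ ^ 2) / 2)) ≤ RCLike.re (inner 𝕜 (a • x) (b • y)) := by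
  have am_gm : ‖a‖ * ‖b‖ ≤ (‖a‖ ^ 2 + ‖b‖ ^ 2) / 2 := by
    linarith [two_mul_le_add_sq ‖a‖ ‖b‖]
  have norm_eq : ‖inner 𝕜 (a • x) (b • y)‖ = ‖inner 𝕜 x y‖ * (‖a‖ * ‖b‖) := by
    rw [inner_smul_left, inner_smul_right, norm_mul, norm_mul, RCLike.norm_conj]
    ring
  calc -(‖inner 𝕜 x y‖ * ((‖a‖ ^ 2 + ‖b‖ ^ 2) / 2))
      ≤ -‖inner 𝕜 (a • x) (b • y)‖ := by
        rw [norm_eq]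
        gcongr
    _ ≤ RCLike.re (inner 𝕜 (a • x) (b • y)) := neg_le_of_abs_le (RCLike.abs_re_le_norm _)

lemma norm_sum_sq_eq_sum_add_sum_erase [DecidableEq ι] (s : Finset ι) (f : ι → E) :
    ‖∑ i ∈ s, f i‖ ^ 2 =
      ∑ i ∈ s, (‖f i‖ ^ 2 + ∑ j ∈ s.erase i, RCLike.re (inner 𝕜 (f i) (f j))) := by
  rw [norm_sq_eq_re_inner (𝕜 := 𝕜), sum_inner, map_sum]
  refine sum_congr rfl fun i hi => ?_
  rw [inner_sum, map_sum, ← add_sum_erase s _ hi, ← norm_sq_eq_re_inner]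

lemma sum_norm_sq_sub_sum_norm_inner_mul_le_norm_sum_smul_sq [DecidableEq ι] (s : Finset ι)
    (g : ι → E) (v : ι → 𝕜) :
    ∑ i ∈ s, (‖g i‖ ^ 2 - ∑ j ∈ s.erase i, ‖inner 𝕜 (g i) (g j)‖) * ‖v i‖ ^ 2 ≤
      ‖∑ i ∈ s, v i • g i‖ ^ 2 := by
  have collect := sum_sum_erase_mul_add_div_two s (c := fun i j => ‖inner 𝕜 (g i) (g j)‖)
    (fun i j => norm_inner_symm (g i) (g j)) (fun i => ‖v i‖ ^ 2)
  calc ∑ i ∈ s, (‖g i‖ ^ 2 - ∑ j ∈ s.erase i, ‖inner 𝕜 (g i) (g j)‖) * ‖v i‖ ^ 2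
      = ∑ i ∈ s, (‖v i • g i‖ ^ 2 +
          ∑ j ∈ s.erase i, -(‖inner 𝕜 (g i) (g j)‖ * ((‖v i‖ ^ 2 + ‖v j‖ ^ 2) / 2))) := by
        simp only [sub_mul, sum_sub_distrib, sum_neg_distrib, collect, norm_smul, mul_pow,
          mul_comm (‖v _‖ ^ 2), ← sub_eq_add_neg]
    _ ≤ ∑ i ∈ s, (‖v i • g i‖ ^ 2 +
          ∑ j ∈ s.erase i, RCLike.re (inner 𝕜 (v i • g i) (v j • g j))) := by
        gcongr
        exact neg_norm_inner_mul_le_re_inner_smul_smul _ _ _ _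
    _ = ‖∑ i ∈ s, v i • g i‖ ^ 2 := (norm_sum_sq_eq_sum_add_sum_erase s _).symm

lemma one_sub_card_sub_one_mul_sum_le_norm_sum_smul_sq {s : Finset ι} {g : ι → E} {ε : ℝ}
    (hnorm : ∀ i ∈ s, ‖g i‖ = 1)
    (hcoh : ∀ i ∈ s, ∀ j ∈ s, i ≠ j → ‖inner 𝕜 (g i) (g j)‖ ≤ ε) (v : ι → 𝕜) :
    (1 - ((#s : ℝ) - 1) * ε) * ∑ i ∈ s, ‖v i‖ ^ 2 ≤ ‖∑ i ∈ s, v i • g i‖ ^ 2 := by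
  classical
  have row_sum_le (i : ι) (hi : i ∈ s) :
      ∑ j ∈ s.erase i, ‖inner 𝕜 (g i) (g j)‖ ≤ ((#s : ℝ) - 1) * ε := by
    rw [← cast_card_erase_of_mem hi, ← nsmul_eq_mul]
    exact sum_le_card_nsmul _ _ _ fun j hj =>
      hcoh i hi j (mem_of_mem_erase hj) (ne_of_mem_erase hj).symm
  refine le_trans ?_ (sum_norm_sq_sub_sum_norm_inner_mul_le_norm_sum_smul_sq s g v)
  rw [mul_sum]
  gcongr with i hi
  · rw [hnorm i hi, one_pow]
  · exact row_sum_le i hi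

end InnerProductSpace

section Matrix

open scoped Matrix Matrix.Norms.Frobenius

variable {𝕜 m n p : Type*} [RCLike 𝕜] [Fintype n]

lemma toLp_mulVec_eq_sum_smul_col (G : Matrix m n 𝕜) {Λ : Finset n} {v : n → 𝕜}
    (hv : ∀ j ∉ Λ, v j = 0) :
    WithLp.toLp 2 (G *ᵥ v) = ∑ j ∈ Λ, v j • WithLp.toLp 2 (G.col j) := by
  have sum_support : ∑ j ∈ Λ, v j • WithLp.toLp 2 (G.col j) = ∑ j, v j • WithLp.toLp 2 (G.col j) :=
    sum_subset (subset_univ Λ) fun j _ hj => by rw [hv j hj, zero_smul]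
  rw [sum_support]
  ext i
  simp [Matrix.mulVec, dotProduct, mul_comm]

variable [Fintype m] [Fintype p]

lemma frobenius_norm_sq_eq_sum_col (X : Matrix m p 𝕜) : ‖X‖ ^ 2 = ∑ t, ∑ i, ‖X i t‖ ^ 2 := by
  rw [Matrix.frobenius_norm_def, ← Real.sqrt_eq_rpow, Real.sq_sqrt (by positivity), sum_comm]
  simp only [Real.rpow_ofNat]

lemma frob_eq_frobenius_norm (X : Matrix m p ℂ) : frob X = ‖X‖ := by
  rw [frob, sum_comm, ← frobenius_norm_sq_eq_sum_col, Real.sqrt_sq (norm_nonneg X)]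

lemma frobenius_norm_le_div_sqrt_of_col_le {X : Matrix n p 𝕜} {Y : Matrix m p 𝕜} {c : ℝ}
    (hc : 0 < c) (hcol : ∀ t, c * ∑ j, ‖X j t‖ ^ 2 ≤ ∑ i, ‖Y i t‖ ^ 2) : ‖X‖ ≤ ‖Y‖ / √c := by
  rw [le_div_iff₀ (Real.sqrt_pos.mpr hc)]
  refine le_of_pow_le_pow_left₀ two_ne_zero (norm_nonneg Y) ?_
  rw [mul_pow, Real.sq_sqrt hc.le, mul_comm, frobenius_norm_sq_eq_sum_col,
    frobenius_norm_sq_eq_sum_col, mul_sum]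
  exact sum_le_sum fun t _ => hcol t

theorem one_sub_card_sub_one_mul_sum_le_sum_norm_mulVec_sq {G : Matrix m n 𝕜} {Λ : Finset n}
    {ε : ℝ} (hcols : ∀ j ∈ Λ, √(∑ i, ‖G i j‖ ^ 2) = 1)
    (hcoh : ∀ i ∈ Λ, ∀ j ∈ Λ, i ≠ j → ‖∑ k, (starRingEnd 𝕜) (G k i) * G k j‖ ≤ ε)
    {v : n → 𝕜} (hv : ∀ j ∉ Λ, v j = 0) :
    (1 - ((#Λ : ℝ) - 1) * ε) * ∑ j, ‖v j‖ ^ 2 ≤ ∑ i, ‖(G *ᵥ v) i‖ ^ 2 := by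
  have norm_col (j : n) (hj : j ∈ Λ) : ‖WithLp.toLp 2 (G.col j)‖ = 1 :=
    (EuclideanSpace.norm_eq _).trans (hcols j hj)
  have inner_col (i j : n) : inner 𝕜 (WithLp.toLp 2 (G.col i)) (WithLp.toLp 2 (G.col j)) =
      ∑ k, (starRingEnd 𝕜) (G k i) * G k j := by
    simp only [PiLp.inner_apply, RCLike.inner_apply', Matrix.col_apply]
  have sum_support : ∑ j ∈ Λ, ‖v j‖ ^ 2 = ∑ j, ‖v j‖ ^ 2 :=
    sum_subset (subset_univ Λ) fun j _ hj => by simp [hv j hj]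
  have bound := one_sub_card_sub_one_mul_sum_le_norm_sum_smul_sq norm_col
    (fun i hi j hj hij => (inner_col i j).symm ▸ hcoh i hi j hj hij) v
  rwa [sum_support, ← toLp_mulVec_eq_sum_smul_col G hv, EuclideanSpace.norm_sq_eq] at bound

theorem restricted_lower_singular_bound_general {G : Matrix m n 𝕜} {Λ : Finset n} {ε : ℝ}
    (hcols : ∀ j ∈ Λ, √(∑ i, ‖G i j‖ ^ 2) = 1)
    (hcoh : ∀ i ∈ Λ, ∀ j ∈ Λ, i ≠ j → ‖∑ k, (starRingEnd 𝕜) (G k i) * G k j‖ ≤ ε)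
    (hΛ : ((#Λ : ℝ) - 1) * ε < 1) :
    (∀ v : n → 𝕜, (∀ j ∉ Λ, v j = 0) →
      (1 - ((#Λ : ℝ) - 1) * ε) * ∑ j, ‖v j‖ ^ 2 ≤ ∑ i, ‖(G *ᵥ v) i‖ ^ 2) ∧
    (∀ X : Matrix n p 𝕜, (∀ i ∉ Λ, X i = 0) →
      ‖X‖ ≤ ‖G * X‖ / √(1 - ((#Λ : ℝ) - 1) * ε)) := by
  have vector_bound (v : n → 𝕜) (hv : ∀ j ∉ Λ, v j = 0) :=
    one_sub_card_sub_one_mul_sum_le_sum_norm_mulVec_sq hcols hcoh hv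
  exact ⟨vector_bound, fun X hX => frobenius_norm_le_div_sqrt_of_col_le (sub_pos.mpr hΛ) fun t =>
    vector_bound (X.col t) fun j hj => congrFun (hX j hj) t⟩

end Matrix

/-- With `|Λ| = M` and `(M−1)ε < 1`: every vector `v` supported on
`Λ` satisfies `‖Gv‖₂² ≥ (1 − (M−1)ε)‖v‖₂²`, and consequently every matrix `X` with
row-support inside `Λ` satisfies `‖X‖_F ≤ ‖GX‖_F / √(1 − (M−1)ε)`. -/
theorem restricted_lower_singular_bound
    (N K ν : ℕ) (hN : 0 < N) (hK : 0 < K) (hν : 0 < ν) (ε : ℝ) (hε : 0 < ε)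
    (G : Matrix (Fin N) (Fin K) ℂ)
    (hcols : ∀ j : Fin K, Real.sqrt (∑ i, ‖G i j‖ ^ 2) = 1)
    (hcoh : ∀ i j : Fin K, i ≠ j →
      ‖∑ n, (starRingEnd ℂ) (G n i) * G n j‖ < ε)
    (Λ : Finset (Fin K)) (M : ℕ) (hcard : Λ.card = M)
    (hM : ((M : ℝ) - 1) * ε < 1) :
    (∀ v : Fin K → ℂ, (∀ j ∉ Λ, v j = 0) →
      (∑ i, ‖G.mulVec v i‖ ^ 2) ≥ (1 - ((M : ℝ) - 1) * ε) * ∑ j, ‖v j‖ ^ 2) ∧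
    (∀ X : Matrix (Fin K) (Fin ν) ℂ, (∀ i ∉ Λ, X i = 0) →
      frob X ≤ frob (G * X) / Real.sqrt (1 - ((M : ℝ) - 1) * ε)) := by
  subst hcard
  simpa only [ge_iff_le, frob_eq_frobenius_norm] using restricted_lower_singular_bound_general
    (fun j _ => hcols j) (fun i _ j _ hij => (hcoh i j hij).le) hM
end
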